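/- Let G be the universal grading group of the fusion category Rep(H*). For any two subgroups M and N of G, the map H(M)·C·H(N) ↦ M·deg(C)·N is a well-defined bijection from the set of double cosets H(M)\H/H(N) (of subcoalgebras of H with respect to the Hopf subalgebras H(M) and H(N)) onto the set of group double cosets M\G/N. -/

import Mathlib

open TensorProduct

namespace MackeyPaper

noncomputable section

universe v

variable (k : Type) [Field k] [CharZero k] [IsAlgClosed k]
variable (H : Type) [Ring H] [HopfAlgebra k H]

/-- A subcoalgebra of `H`: a `k`-subspace `C` with `Δ(C) ⊆ C ⊗ C`. -/
def IsSubcoalgebra (C : Submodule k H) : Prop :=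
  ∀ c ∈ C, Coalgebra.comul (R := k) c ∈
    LinearMap.range (TensorProduct.map C.subtype C.subtype)

/-- A simple (nonzero, minimal) subcoalgebra of `H`. -/
def IsSimpleSubcoalgebra (C : Submodule k H) : Prop :=
  IsSubcoalgebra k H C ∧ C ≠ ⊥ ∧
    ∀ D : Submodule k H, D ≤ C → IsSubcoalgebra k H D → D ≠ ⊥ → D = C

/-- A Hopf subalgebra of `H`: a subalgebra which is a subcoalgebra and is
stable under the antipode. -/
def IsHopfSubalgebra (K : Subalgebra k H) : Prop :=
  IsSubcoalgebra k H K.toSubmodule ∧ ∀ x ∈ K, HopfAlgebra.antipode (R := k) x ∈ K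

/-- `Λ` is the (two-sided) idempotent integral of the Hopf subalgebra `K`,
i.e. the integral normalized by `ε(Λ) = 1`. -/
def IsIdempotentIntegral (K : Subalgebra k H) (Λ : H) : Prop :=
  Λ ∈ K ∧ Coalgebra.counit (R := k) Λ = 1 ∧
    ∀ x ∈ K, x * Λ = Coalgebra.counit (R := k) x • Λ ∧
      Λ * x = Coalgebra.counit (R := k) x • Λ

/-- A cocommutative element of `H`; the cocommutative elements of `H` form
the character ring `C(H^*)`. -/
def IsCocomm (x : H) : Prop :=
  (TensorProduct.comm k H H) (Coalgebra.comul (R := k) x) = Coalgebra.comul (R := k) x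

/-- The character ring `C(H^*)`, i.e. the space of cocommutative elements of `H`,
as a `k`-subspace of `H`. -/
def charRing : Submodule k H :=
  LinearMap.ker ((TensorProduct.comm k H H).toLinearMap ∘ₗ Coalgebra.comul (R := k)
      - Coalgebra.comul (R := k))

/-- `d` is the irreducible character (of `H^*`) associated to the simple
subcoalgebra `C`: the unique cocommutative element of `C` whose counit is the
positive square root of `dim_k C`. -/
def IsCharacterOf (d : H) (C : Submodule k H) : Prop :=
  d ∈ C ∧ IsCocomm k H d ∧
    Coalgebra.counit (R := k) d = ((Nat.sqrt (Module.finrank k ↥C) : ℕ) : k)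

/-- The right coset `CK` of a subcoalgebra `C`, i.e. the subspace `C·K`. -/
def CKsub (K : Subalgebra k H) (C : Submodule k H) : Submodule k H :=
  C * K.toSubmodule

/-- The conjugate Hopf subalgebra `ᶜK` of `K` by a simple subcoalgebra `C`
(with associated irreducible character `c`): the span of all simple
subcoalgebras of `H` whose irreducible character `d` satisfies
`d·c·Λ_K = ε(d)·c·Λ_K`.  (The condition is stated for all cocommutative
elements of `C` resp. `D`; this is equivalent, since the cocommutative
elements of a simple subcoalgebra are exactly the scalar multiples of its
irreducible character.) -/
def conjK (K : Subalgebra k H) (Λ : H) (C : Submodule k H) : Submodule k H :=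
  sSup {D : Submodule k H | IsSimpleSubcoalgebra k H D ∧
    ∀ d ∈ D, IsCocomm k H d → ∀ c ∈ C, IsCocomm k H c →
      d * (c * Λ) = Coalgebra.counit (R := k) d • (c * Λ)}

/-- A complete irredundant system of representatives (by simple subcoalgebras)
of the double cosets `L\H/K`.  (Taking `L = ⊥` gives a system of
representatives of the right cosets `H/K`.) -/
def IsDoubleCosetReps (L K : Subalgebra k H) {ι : Type} (rep : ι → Submodule k H) : Prop :=
  (∀ i, IsSimpleSubcoalgebra k H (rep i)) ∧
  (∀ i j, L.toSubmodule * rep i * K.toSubmodule = L.toSubmodule * rep j * K.toSubmodule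
      → i = j) ∧
  (∀ C : Submodule k H, IsSimpleSubcoalgebra k H C →
      ∃ i, C ≤ L.toSubmodule * rep i * K.toSubmodule)

section Ind

variable (K : Subalgebra k H) (M : Type v) [AddCommGroup M] [Module k M]
  [Module ↥K M] [IsScalarTower k ↥K M]

/-- The relations defining the induced module `H ⊗_K M` as a quotient of
`H ⊗_k M`: the `H`-submodule generated by the elements `a ⊗ m - 1 ⊗ a·m`
for `a ∈ K` (equivalently, spanned by all `h·a ⊗ m - h ⊗ a·m`). -/
def indRel : Submodule H (H ⊗[k] M) :=
  Submodule.span H {z | ∃ (a : ↥K) (m : M),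
    z = (a : H) ⊗ₜ[k] m - (1 : H) ⊗ₜ[k] (a • m)}

/-- The induced module `M↑_K^H = H ⊗_K M`, a left `H`-module. -/
abbrev Ind := (H ⊗[k] M) ⧸ indRel k H K M

variable (C : Submodule k H)

/-- The underlying space `CK ⊗_k M` of which the conjugate module `ᶜM` is a
quotient. -/
def CKM : Type _ := ↥(CKsub k H K C) ⊗[k] M

instance : AddCommGroup (CKM k H K M C) :=
  inferInstanceAs (AddCommGroup (↥(CKsub k H K C) ⊗[k] M))

instance : Module k (CKM k H K M C) :=
  inferInstanceAs (Module k (↥(CKsub k H K C) ⊗[k] M))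

/-- The pure tensor `x ⊗ m` as an element of `CK ⊗_k M`. -/
def ckmk (x : ↥(CKsub k H K C)) (m : M) : CKM k H K M C := x ⊗ₜ[k] m

/-- The relations defining the conjugate module `ᶜM = CK ⊗_K M` as a quotient
of `CK ⊗_k M`: `x·a ⊗ m - x ⊗ a·m` for `a ∈ K`. -/
def conjRel : Submodule k (CKM k H K M C) :=
  Submodule.span k {z | ∃ (x : ↥(CKsub k H K C)) (a : ↥K) (m : M)
    (hxa : (x : H) * (a : H) ∈ CKsub k H K C),
    z = ckmk k H K M C ⟨(x : H) * (a : H), hxa⟩ m - ckmk k H K M C x (a • m)}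

/-- The conjugate module `ᶜM := CK ⊗_K M`. -/
abbrev ConjM := CKM k H K M C ⧸ conjRel k H K M C

/-- The canonical copy of the conjugate module `ᶜM = CK ⊗_K M` inside
`H ⊗_K M` (the image of `CK ⊗_K M` under multiplication; this is indeed a
copy of `ᶜM` since `H` is a free right `K`-module and `CK` is one of the
coset summands). -/
def conjMsub : Submodule k (Ind k H K M) :=
  Submodule.span k {z | ∃ (x : H) (_ : x ∈ CKsub k H K C) (m : M),
    z = Submodule.Quotient.mk (x ⊗ₜ[k] m)}

end Ind

section Comp

variable (L K : Subalgebra k H) (Λ : H) (C : Submodule k H)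
variable (M : Type v) [AddCommGroup M] [Module k M] [Module ↥K M] [IsScalarTower k ↥K M]

/-- The underlying space `L ⊗_k (CK ⊗_k M)`. -/
def LCM : Type _ := ↥L ⊗[k] CKM k H K M C

instance : AddCommGroup (LCM k H L K C M) :=
  inferInstanceAs (AddCommGroup (↥L ⊗[k] CKM k H K M C))

instance : Module k (LCM k H L K C M) :=
  inferInstanceAs (Module k (↥L ⊗[k] CKM k H K M C))

/-- The pure tensor `l ⊗ w` as an element of `L ⊗_k (CK ⊗_k M)`. -/
def lcmk (l : ↥L) (w : CKM k H K M C) : LCM k H L K C M := l ⊗ₜ[k] w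

/-- The relations defining `L ⊗_{L ∩ ᶜK} ᶜM` as a quotient of
`L ⊗_k (CK ⊗_k M)`: the balancedness relations over `L ∩ ᶜK` (first set),
together with (the image of) the relations defining `ᶜM = CK ⊗_K M`
(second set). -/
def compRel : Submodule k (LCM k H L K C M) :=
  Submodule.span k
    ({z | ∃ (l : ↥L) (a : H) (haL : a ∈ L) (_ : a ∈ conjK k H K Λ C)
        (x : ↥(CKsub k H K C)) (m : M) (hax : a * (x : H) ∈ CKsub k H K C),
        z = lcmk k H L K C M ⟨(l : H) * a, mul_mem l.2 haL⟩ (ckmk k H K M C x m)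
          - lcmk k H L K C M l (ckmk k H K M C ⟨a * (x : H), hax⟩ m)} ∪
     {z | ∃ (l : ↥L) (x : ↥(CKsub k H K C)) (a : ↥K) (m : M)
        (hxa : (x : H) * (a : H) ∈ CKsub k H K C),
        z = lcmk k H L K C M l (ckmk k H K M C ⟨(x : H) * (a : H), hxa⟩ m)
          - lcmk k H L K C M l (ckmk k H K M C x (a • m))})

/-- The module `L ⊗_{L ∩ ᶜK} ᶜM` (a left `L`-module via multiplication on the
first tensor factor). -/
abbrev Comp := LCM k H L K C M ⧸ compRel k H L K Λ C M

end Comp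

open DirectSum

section Mackey

variable (L K : Subalgebra k H) (Λ : H)

/-- The Mackey isomorphism property for the pair `(L, K)` at the `K`-module
`M`: for any system of double coset representatives, the left-multiplication
map `⊕_C L ⊗_{L ∩ ᶜK} ᶜM → M↑_K^H↓_L^H`, `l ⊗ v ↦ l·v`, is an isomorphism of
`L`-modules.  (A `k`-linear map satisfying the displayed formula on the
spanning elements is automatically `L`-equivariant for the evident
`L`-actions, so this property is stated for `k`-linear maps.) -/
def MackeyAt (M : Type v) [AddCommGroup M] [Module k M] [Module ↥K M]
    [IsScalarTower k ↥K M] [Module.Finite k M] : Prop :=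
  ∀ (ι : Type) [DecidableEq ι] (rep : ι → Submodule k H),
    IsDoubleCosetReps k H L K rep →
    ∃ π : (⨁ i : ι, Comp k H L K Λ (rep i) M) →ₗ[k] Ind k H K M,
      Function.Bijective π ∧
      ∀ (i : ι) (l : ↥L) (x : ↥(CKsub k H K (rep i))) (m : M),
        π (DirectSum.of (fun i => Comp k H L K Λ (rep i) M) i
            (Submodule.Quotient.mk (lcmk k H L K (rep i) M l (ckmk k H K M (rep i) x m)))) =
          Submodule.Quotient.mk (((l : H) * (x : H)) ⊗ₜ[k] m)

/-- `(L, K)` is a Mackey pair of Hopf subalgebras of `H` (here `Λ` is the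
idempotent integral of `K`): for every finite-dimensional `K`-module `M` the
left-multiplication homomorphism `π_M` is an isomorphism. -/
def IsMackeyPair : Prop :=
  ∀ (M : Type v) [AddCommGroup M] [Module k M] [Module ↥K M]
    [IsScalarTower k ↥K M] [Module.Finite k M], MackeyAt k H L K Λ M

end Mackey


section Statements

variable [FiniteDimensional k H] [IsSemisimpleRing H]

/-- A `G`-grading on the fusion category `Rep(H^*)`, described via the
canonical bijection between simple objects of `Rep(H^*)` and simple
subcoalgebras of `H`: a degree function on simple subcoalgebras such that
every simple subcoalgebra of a product `C·D` (i.e. every simple constituent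
of the corresponding tensor product of comodules) has degree
`deg C · deg D`. -/
def IsGrading (G : Type) [Group G] (deg : Submodule k H → G) : Prop :=
  ∀ C D E : Submodule k H, IsSimpleSubcoalgebra k H C →
    IsSimpleSubcoalgebra k H D → IsSimpleSubcoalgebra k H E →
    E ≤ C * D → deg E = deg C * deg D

/-- The universal grading of `Rep(H^*)`: every grading factors uniquely
through it. -/
def IsUniversalGrading (G : Type) [Group G] (deg : Submodule k H → G) : Prop :=
  IsGrading k H G deg ∧
    ∀ (G' : Type) [Group G'] (deg' : Submodule k H → G'), IsGrading k H G' deg' →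
      ∃! f : G →* G', ∀ C : Submodule k H, IsSimpleSubcoalgebra k H C →
        deg' C = f (deg C)

/-- For a subset `S ⊆ G`, the subcoalgebra `H(S)` of `H` spanned by the simple
subcoalgebras whose degree lies in `S`. -/
def Hgr (G : Type) [Group G] (deg : Submodule k H → G) (S : Set G) : Submodule k H :=
  sSup {C : Submodule k H | IsSimpleSubcoalgebra k H C ∧ deg C ∈ S}

end Statements

end

end MackeyPaper

/-!
Annihilators in the convolution algebra `H^*` turn subcoalgebras of `H` into two-sided ideals. In
an Artinian ring every prime ideal is a maximal two-sided ideal, so a nonzero subcoalgebra that is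
not simple lies in a wedge `X ∧ Y` of two strictly smaller ones, while a simple subcoalgebra
contained in `X ∧ Y` lies in `X` or in `Y`. As `(X ∧ Y) B ⊆ X B ∧ Y B`, descending along wedges
shows that a simple `D ⊆ A B` is contained in `A' B` for some simple `A' ⊆ A`; this replaces the
decomposition of a tensor product into simple constituents. The degree of a simple
`D ⊆ H(M) C H(N)` can then be read off factor by factor, and conversely, if
`deg D ∈ M (deg C) N`, multiplying by duals, which exist by the antipode axiom, puts `D` inside
`H(M) C H(N)`. The attained degrees form a subgroup of `G`, which universality forces to be all
of `G`; this gives surjectivity.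
-/

namespace MackeyPaper

section PrimeIdeals

variable {R : Type*} [Ring R] {I J : Ideal R}

/-- Primeness of an ideal with respect to products of two-sided ideals, the notion of prime ideal
suited to noncommutative rings; `Ideal.IsPrime` is the stronger notion of a completely prime
ideal. -/
def IsPrimeTwoSided (I : Ideal R) : Prop :=
  I ≠ ⊤ ∧ ∀ K L : Ideal R, K.IsTwoSided → L.IsTwoSided → K * L ≤ I → K ≤ I ∨ L ≤ I

theorem isTwoSided_sup [I.IsTwoSided] [J.IsTwoSided] : (I ⊔ J).IsTwoSided :=
  ⟨fun {x} b hx => by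
    obtain ⟨i, hi, j, hj, rfl⟩ := Submodule.mem_sup.mp hx
    rw [add_mul]
    exact Submodule.add_mem_sup (I.mul_mem_right b hi) (J.mul_mem_right b hj)⟩

theorem IsPrimeTwoSided.le_of_pow_le (hI : IsPrimeTwoSided I) [J.IsTwoSided] {n : ℕ}
    (h : J ^ n ≤ I) : J ≤ I := by
  induction n with
  | zero =>
    rw [Submodule.pow_zero, Ideal.one_eq_top] at h
    exact le_top.trans h
  | succ n ih =>
    rw [Submodule.pow_succ] at h
    exact (hI.2 _ _ inferInstance inferInstance h).elim ih id

variable [IsArtinianRing R]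

theorem IsPrimeTwoSided.isSemisimpleModule_quotient (hI : IsPrimeTwoSided I) :
    IsSemisimpleModule R (R ⧸ I) := by
  obtain ⟨n, hn⟩ := IsSemiprimaryRing.isNilpotent (R := R)
  have hle : Ring.jacobson R ≤ I := hI.le_of_pow_le (n := n) (hn.le.trans bot_le)
  have htors : Module.IsTorsionBySet R (R ⧸ I) (Ring.jacobson R : Set R) :=
    (Module.isTorsionBySet_quotient_iff _ _).mpr fun x _ hr => hle (Ideal.mul_mem_right x _ hr)
  let _ := htors.module
  have := IsSemiprimaryRing.isSemisimpleRing (R := R)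
  exact htors.isSemisimpleModule_iff.mp inferInstance

theorem IsPrimeTwoSided.eq_top_of_lt [I.IsTwoSided] [J.IsTwoSided] (hI : IsPrimeTwoSided I)
    (hIJ : I < J) : J = ⊤ := by
  have := hI.isSemisimpleModule_quotient
  have : ComplementedLattice (Set.Ici I) := (Submodule.comapMkQRelIso I).complementedLattice
  obtain ⟨⟨L, hL⟩, hJL⟩ := exists_isCompl (⟨J, hIJ.le⟩ : Set.Ici I)
  have hinf : J ⊓ L = I := congrArg Subtype.val hJL.inf_eq_bot
  have hsup : J ⊔ L = ⊤ := congrArg Subtype.val hJL.sup_eq_top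
  have hmul : J * (L * ⊤) ≤ I :=
    calc J * (L * ⊤) = J * L * ⊤ := Ideal.mul_assoc.symm
      _ ≤ I * ⊤ := Ideal.mul_mono_left (Ideal.mul_le_inf.trans hinf.le)
      _ = I := Ideal.mul_top I
  have hLI : L * ⊤ ≤ I :=
    (hI.2 J (L * ⊤) inferInstance inferInstance hmul).resolve_left hIJ.not_ge
  have hLJ : L ≤ J := fun x hx =>
    hIJ.le (hLI (mul_one x ▸ Ideal.mul_mem_mul hx Submodule.mem_top))
  exact sup_eq_left.mpr hLJ ▸ hsup

theorem exists_mul_le_of_lt_of_ne_top [I.IsTwoSided] [J.IsTwoSided] (hIJ : I < J) (hJ : J ≠ ⊤) :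
    ∃ K L : Ideal R, K.IsTwoSided ∧ L.IsTwoSided ∧ I < K ∧ I < L ∧ K * L ≤ I := by
  by_contra! hcon
  refine hJ (IsPrimeTwoSided.eq_top_of_lt ⟨hIJ.ne_top, fun K L hK hL hKL => ?_⟩ hIJ)
  by_contra! hne
  refine hcon (I ⊔ K) (I ⊔ L) isTwoSided_sup isTwoSided_sup (left_lt_sup.mpr hne.1)
    (left_lt_sup.mpr hne.2) ?_
  rw [Ideal.mul_sup, Ideal.sup_mul, Ideal.sup_mul]
  exact sup_le (sup_le Ideal.mul_le_right Ideal.mul_le_right) (sup_le Ideal.mul_le_left hKL)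

end PrimeIdeals

section ConvolutionDual

variable {k V : Type*} [Field k] [AddCommGroup V] [Module k V]

/-- The annihilator `A^⊥` of a subspace `A`, as a subspace of the convolution dual. -/
def convAnn (A : Submodule k V) : Submodule k (WithConv (V →ₗ[k] k)) :=
  A.dualAnnihilator.comap (WithConv.linearEquiv k (V →ₗ[k] k)).toLinearMap

/-- The common zeros `U^⊥` of a subspace `U` of the convolution dual. -/
def convCoann (U : Submodule k (WithConv (V →ₗ[k] k))) : Submodule k V :=
  Submodule.dualCoannihilator (U.map (WithConv.linearEquiv k (V →ₗ[k] k)).toLinearMap)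

theorem mem_convAnn {A : Submodule k V} {f : WithConv (V →ₗ[k] k)} :
    f ∈ convAnn A ↔ ∀ x ∈ A, f x = 0 :=
  Submodule.mem_dualAnnihilator _

theorem mem_convCoann {U : Submodule k (WithConv (V →ₗ[k] k))} {x : V} :
    x ∈ convCoann U ↔ ∀ f ∈ U, f x = 0 := by
  simp [convCoann, WithConv.toConv_surjective.forall]

theorem le_convCoann_iff {A : Submodule k V} {U : Submodule k (WithConv (V →ₗ[k] k))} :
    A ≤ convCoann U ↔ U ≤ convAnn A :=
  ⟨fun h f hf => mem_convAnn.mpr fun _ hx => mem_convCoann.mp (h hx) f hf,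
    fun h x hx => mem_convCoann.mpr fun _ hf => mem_convAnn.mp (h hf) x hx⟩

theorem convCoann_convAnn (A : Submodule k V) : convCoann (convAnn A) = A := by
  rw [convCoann, convAnn, Submodule.map_comap_eq_of_surjective (LinearEquiv.surjective _),
    Subspace.dualAnnihilator_dualCoannihilator_eq]

theorem convAnn_bot : convAnn (⊥ : Submodule k V) = ⊤ := by
  rw [convAnn, Submodule.dualAnnihilator_bot, Submodule.comap_top]

theorem convAnn_le_convAnn_iff {A B : Submodule k V} : convAnn B ≤ convAnn A ↔ A ≤ B := by
  rw [← le_convCoann_iff, convCoann_convAnn]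

theorem convAnn_lt_convAnn_iff {A B : Submodule k V} : convAnn B < convAnn A ↔ A < B :=
  lt_iff_lt_of_le_iff_le' convAnn_le_convAnn_iff convAnn_le_convAnn_iff

theorem convAnn_inf (A B : Submodule k V) : convAnn (A ⊓ B) = convAnn A ⊔ convAnn B := by
  simp only [convAnn, Subspace.dualAnnihilator_inf_eq, Submodule.comap_equiv_eq_map_symm,
    Submodule.map_sup]

variable [FiniteDimensional k V]

theorem convAnn_convCoann (U : Submodule k (WithConv (V →ₗ[k] k))) :
    convAnn (convCoann U) = U := by
  rw [convCoann, convAnn, Subspace.dualCoannihilator_dualAnnihilator_eq,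
    Submodule.comap_map_eq_of_injective (LinearEquiv.injective _)]

end ConvolutionDual

section TensorSeparation

variable {k V W : Type*} [Field k] [AddCommGroup V] [Module k V] [AddCommGroup W] [Module k W]

theorem tensor_eq_zero_of_forall_map_eq_zero {t : V ⊗[k] W}
    (h : ∀ (f : Module.Dual k V) (g : Module.Dual k W), LinearMap.mul' k k (map f g t) = 0) :
    t = 0 := by
  let b := Module.Basis.ofVectorSpace k V
  let c := Module.Basis.ofVectorSpace k W
  refine (b.tensorProduct c).ext_elem fun ⟨i, j⟩ => ?_
  have hcoord : (b.tensorProduct c).coord (i, j) =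
      LinearMap.mul' k k ∘ₗ map (b.coord i) (c.coord j) :=
    TensorProduct.ext' fun x y => by simp [Module.Basis.tensorProduct_repr_tmul_apply, mul_comm]
  simpa using (LinearMap.congr_fun hcoord t).trans (h _ _)

theorem exists_sub_comp_mem_dualAnnihilator (A : Submodule k V) :
    ∃ p : V →ₗ[k] A, ∀ f : Module.Dual k V, f - f ∘ₗ A.subtype ∘ₗ p ∈ A.dualAnnihilator := by
  obtain ⟨p, hp⟩ := A.subtype.exists_leftInverse_of_injective A.ker_subtype
  refine ⟨p, fun f => (Submodule.mem_dualAnnihilator _).mpr fun x hx => ?_⟩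
  have : p x = ⟨x, hx⟩ := LinearMap.congr_fun hp ⟨x, hx⟩
  simp [this]

theorem mem_map₂_mk_of_forall_map_eq_zero {A : Submodule k V} {B : Submodule k W} {t : V ⊗[k] W}
    (hA : ∀ f ∈ A.dualAnnihilator, ∀ g : Module.Dual k W, LinearMap.mul' k k (map f g t) = 0)
    (hB : ∀ f : Module.Dual k V, ∀ g ∈ B.dualAnnihilator, LinearMap.mul' k k (map f g t) = 0) :
    t ∈ Submodule.map₂ (TensorProduct.mk k V W) A B := by
  obtain ⟨p, hp⟩ := exists_sub_comp_mem_dualAnnihilator A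
  obtain ⟨q, hq⟩ := exists_sub_comp_mem_dualAnnihilator B
  have ht : t - mapIncl A B (map p q t) = 0 := by
    refine tensor_eq_zero_of_forall_map_eq_zero fun f g => ?_
    set f' : Module.Dual k V := f ∘ₗ A.subtype ∘ₗ p with hf'
    set g' : Module.Dual k W := g ∘ₗ B.subtype ∘ₗ q with hg'
    have hcomp : map f g (mapIncl A B (map p q t)) = map f' g' t := by
      simp only [mapIncl, ← LinearMap.comp_apply, ← map_comp, hf', hg']
    have hsplit : map f g t = map (f - f') g t + map f' (g - g') t + map f' g' t := by
      simp only [← LinearMap.add_apply, add_assoc, ← map_add_right, ← map_add_left,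
        sub_add_cancel]
    rw [map_sub, hcomp, hsplit, add_sub_cancel_right, map_add, hA _ (hp f), hB _ _ (hq g),
      add_zero]
  rw [← range_mapIncl, sub_eq_zero.mp ht]
  exact LinearMap.mem_range_self _ _

end TensorSeparation

section Wedge

variable {k V : Type*} [Field k] [AddCommGroup V] [Module k V] [Coalgebra k V]

/-- Sweedler's wedge `X ∧ Y = (X^⊥ * Y^⊥)^⊥`, equivalently `Δ⁻¹(X ⊗ V + V ⊗ Y)`. -/
noncomputable def wedge (X Y : Submodule k V) : Submodule k V :=
  convCoann (convAnn X * convAnn Y)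

theorem le_wedge_iff {A X Y : Submodule k V} :
    A ≤ wedge X Y ↔ convAnn X * convAnn Y ≤ convAnn A :=
  le_convCoann_iff

theorem mem_wedge {X Y : Submodule k V} {x : V} :
    x ∈ wedge X Y ↔ ∀ f ∈ convAnn X, ∀ g ∈ convAnn Y, (f * g) x = 0 := by
  rw [← Submodule.span_singleton_le_iff_mem, le_wedge_iff, Submodule.mul_le]
  refine forall₄_congr fun f _ g _ => mem_convAnn.trans
    ⟨fun h => h x (Submodule.mem_span_singleton_self x), fun h y hy => ?_⟩
  obtain ⟨c, rfl⟩ := Submodule.mem_span_singleton.mp hy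
  rw [map_smul, h, smul_zero]

end Wedge

section TensorProductAlgebra

variable {R S T : Type*} [CommSemiring R] [Semiring S] [Algebra R S] [Semiring T] [Algebra R T]
  {M M' : Submodule R S} {N N' : Submodule R T}

theorem map₂_mk_mul_map₂_mk_le :
    Submodule.map₂ (TensorProduct.mk R S T) M N * Submodule.map₂ (TensorProduct.mk R S T) M' N' ≤
      Submodule.map₂ (TensorProduct.mk R S T) (M * M') (N * N') := by
  rw [Submodule.map₂_eq_span_image2, Submodule.map₂_eq_span_image2, Submodule.span_mul_span,
    Submodule.span_le]
  rintro _ ⟨_, ⟨a, ha, b, hb, rfl⟩, _, ⟨a', ha', b', hb', rfl⟩, rfl⟩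
  simpa only [mk_apply, Algebra.TensorProduct.tmul_mul_tmul, SetLike.mem_coe] using
    Submodule.apply_mem_map₂ (TensorProduct.mk R S T) (Submodule.mul_mem_mul ha ha')
      (Submodule.mul_mem_mul hb hb')

end TensorProductAlgebra

section Subcoalgebra

variable {k H : Type} [Field k] [Ring H] [HopfAlgebra k H] {A B C D X Y : Submodule k H}

theorem isSubcoalgebra_iff_le_comap_comul : IsSubcoalgebra k H A ↔
    A ≤ (Submodule.map₂ (TensorProduct.mk k H H) A A).comap (Coalgebra.comul (R := k)) := by
  rw [← range_mapIncl]
  rfl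

theorem IsSubcoalgebra.comul_mem (hA : IsSubcoalgebra k H A) {a : H} (ha : a ∈ A) :
    Coalgebra.comul (R := k) a ∈ Submodule.map₂ (TensorProduct.mk k H H) A A :=
  isSubcoalgebra_iff_le_comap_comul.mp hA ha

theorem isSubcoalgebra_bot : IsSubcoalgebra k H (⊥ : Submodule k H) :=
  isSubcoalgebra_iff_le_comap_comul.mpr bot_le

theorem isSubcoalgebra_top : IsSubcoalgebra k H (⊤ : Submodule k H) := by
  rw [isSubcoalgebra_iff_le_comap_comul, map₂_mk_top_top_eq_top, Submodule.comap_top]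

theorem IsSubcoalgebra.sup (hA : IsSubcoalgebra k H A) (hB : IsSubcoalgebra k H B) :
    IsSubcoalgebra k H (A ⊔ B) := by
  rw [isSubcoalgebra_iff_le_comap_comul] at *
  exact sup_le (hA.trans (Submodule.comap_mono (Submodule.map₂_le_map₂ le_sup_left le_sup_left)))
    (hB.trans (Submodule.comap_mono (Submodule.map₂_le_map₂ le_sup_right le_sup_right)))

theorem IsSubcoalgebra.mul (hA : IsSubcoalgebra k H A) (hB : IsSubcoalgebra k H B) :
    IsSubcoalgebra k H (A * B) := by
  rw [isSubcoalgebra_iff_le_comap_comul, Submodule.mul_le]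
  intro a ha b hb
  rw [Submodule.mem_comap, Bialgebra.comul_mul]
  exact map₂_mk_mul_map₂_mk_le (Submodule.mul_mem_mul (hA.comul_mem ha) (hB.comul_mem hb))

theorem isSubcoalgebra_one : IsSubcoalgebra k H (1 : Submodule k H) := by
  have hone : (1 : H) ∈ (1 : Submodule k H) := Submodule.one_le.mp le_rfl
  rw [isSubcoalgebra_iff_le_comap_comul, Submodule.one_le, Submodule.mem_comap,
    Bialgebra.comul_one]
  exact Submodule.apply_mem_map₂ _ hone hone

theorem convMul_apply_eq_zero {f g : WithConv (H →ₗ[k] k)} {a : H}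
    (ha : Coalgebra.comul (R := k) a ∈ Submodule.map₂ (TensorProduct.mk k H H) A B)
    (h : ∀ x ∈ A, ∀ y ∈ B, f x * g y = 0) : (f * g) a = 0 := by
  have hle : Submodule.map₂ (TensorProduct.mk k H H) A B ≤
      (LinearMap.mul' k k ∘ₗ map f.ofConv g.ofConv).ker :=
    Submodule.map₂_le.mpr fun x hx y hy => by simpa using h x hx y hy
  rw [LinearMap.convMul_apply]
  exact hle ha

theorem IsSubcoalgebra.convAnn_mul_le (hA : IsSubcoalgebra k H A)
    (U : Submodule k (WithConv (H →ₗ[k] k))) : convAnn A * U ≤ convAnn A :=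
  Submodule.mul_le.mpr fun f hf g _ => mem_convAnn.mpr fun a ha =>
    convMul_apply_eq_zero (hA.comul_mem ha) fun x hx y _ => by
      rw [mem_convAnn.mp hf x hx, zero_mul]

theorem IsSubcoalgebra.mul_convAnn_le (hA : IsSubcoalgebra k H A)
    (U : Submodule k (WithConv (H →ₗ[k] k))) : U * convAnn A ≤ convAnn A :=
  Submodule.mul_le.mpr fun f _ g hg => mem_convAnn.mpr fun a ha =>
    convMul_apply_eq_zero (hA.comul_mem ha) fun x _ y hy => by
      rw [mem_convAnn.mp hg y hy, mul_zero]

theorem isSubcoalgebra_iff_convAnn : IsSubcoalgebra k H A ↔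
    convAnn A * ⊤ ≤ convAnn A ∧ ⊤ * convAnn A ≤ convAnn A := by
  refine ⟨fun h => ⟨h.convAnn_mul_le ⊤, h.mul_convAnn_le ⊤⟩, fun ⟨hl, hr⟩ => ?_⟩
  refine isSubcoalgebra_iff_le_comap_comul.mpr fun a ha =>
    mem_map₂_mk_of_forall_map_eq_zero (fun f hf g => ?_) fun f g hg => ?_
  · have hfg : WithConv.toConv f * WithConv.toConv g ∈ convAnn A :=
      hl (Submodule.mul_mem_mul hf Submodule.mem_top)
    exact mem_convAnn.mp hfg a ha
  · have hfg : WithConv.toConv f * WithConv.toConv g ∈ convAnn A :=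
      hr (Submodule.mul_mem_mul Submodule.mem_top hg)
    exact mem_convAnn.mp hfg a ha

theorem IsSubcoalgebra.inf (hA : IsSubcoalgebra k H A) (hB : IsSubcoalgebra k H B) :
    IsSubcoalgebra k H (A ⊓ B) := by
  rw [isSubcoalgebra_iff_convAnn, convAnn_inf, Submodule.sup_mul, Submodule.mul_sup]
  exact ⟨sup_le_sup (hA.convAnn_mul_le ⊤) (hB.convAnn_mul_le ⊤),
    sup_le_sup (hA.mul_convAnn_le ⊤) (hB.mul_convAnn_le ⊤)⟩

theorem isSubcoalgebra_iff_exists_ideal : IsSubcoalgebra k H A ↔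
    ∃ I : Ideal (WithConv (H →ₗ[k] k)), I.IsTwoSided ∧ convAnn A = I.restrictScalars k := by
  rw [isSubcoalgebra_iff_convAnn]
  constructor
  · rintro ⟨hl, hr⟩
    exact ⟨{ (convAnn A).toAddSubmonoid with
      smul_mem' := fun g f hf => hr (Submodule.mul_mem_mul Submodule.mem_top hf) },
      ⟨fun g hf => hl (Submodule.mul_mem_mul hf Submodule.mem_top)⟩, rfl⟩
  · rintro ⟨I, hI, hA⟩
    rw [hA]
    exact ⟨Submodule.mul_le.mpr fun f hf g _ => I.mul_mem_right g hf,
      Submodule.mul_le.mpr fun f _ g hg => I.mul_mem_left f hg⟩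

theorem IsSubcoalgebra.exists_counit_ne_zero (hA : IsSubcoalgebra k H A) (hA0 : A ≠ ⊥) :
    ∃ a ∈ A, Coalgebra.counit (R := k) a ≠ 0 := by
  by_contra! hcounit
  have hone : (1 : WithConv (H →ₗ[k] k)) ∈ convAnn A :=
    mem_convAnn.mpr fun a ha => by simpa using hcounit a ha
  have htop : (⊤ : Submodule k (WithConv (H →ₗ[k] k))) ≤ convAnn A := fun f _ =>
    hA.convAnn_mul_le ⊤ (one_mul f ▸ Submodule.mul_mem_mul hone Submodule.mem_top)
  rw [← convAnn_bot, convAnn_le_convAnn_iff, le_bot_iff] at htop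
  exact hA0 htop

theorem IsSubcoalgebra.mul_ne_bot (hA : IsSubcoalgebra k H A) (hB : IsSubcoalgebra k H B)
    (hA0 : A ≠ ⊥) (hB0 : B ≠ ⊥) : A * B ≠ ⊥ := by
  obtain ⟨a, ha, ha0⟩ := hA.exists_counit_ne_zero hA0
  obtain ⟨b, hb, hb0⟩ := hB.exists_counit_ne_zero hB0
  refine fun hbot => mul_ne_zero ha0 hb0 ?_
  have hab : a * b = 0 := (Submodule.mem_bot k).mp (hbot ▸ Submodule.mul_mem_mul ha hb)
  rw [← Bialgebra.counit_mul, hab, map_zero]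

theorem IsSubcoalgebra.one_le_top_mul (hA : IsSubcoalgebra k H A) (hA0 : A ≠ ⊥) :
    1 ≤ (⊤ : Submodule k H) * A := by
  obtain ⟨a, ha, ha0⟩ := hA.exists_counit_ne_zero hA0
  have hle : Submodule.map₂ (TensorProduct.mk k H H) A A ≤ (⊤ * A).comap
      (LinearMap.mul' k H ∘ₗ (HopfAlgebra.antipode k).rTensor H) :=
    Submodule.map₂_le.mpr fun x _ y hy => by
      simpa using Submodule.mul_mem_mul Submodule.mem_top hy
  have hmem : algebraMap k H (Coalgebra.counit a) ∈ ⊤ * A :=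
    HopfAlgebra.mul_antipode_rTensor_comul_apply (R := k) a ▸ hle (hA.comul_mem ha)
  rw [Algebra.algebraMap_eq_smul_one, Submodule.smul_mem_iff _ ha0] at hmem
  exact Submodule.one_le.mpr hmem

theorem IsSubcoalgebra.wedge_mul_le (hB : IsSubcoalgebra k H B) :
    wedge X Y * B ≤ wedge (X * B) (Y * B) := by
  refine Submodule.mul_le.mpr fun a ha b hb => mem_wedge.mpr fun f hf g hg => ?_
  have hle : Submodule.map₂ (TensorProduct.mk k H H) B B ≤
      (LinearMap.mul' k k ∘ₗ map f.ofConv g.ofConv ∘ₗ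
        LinearMap.mulLeft k (Coalgebra.comul (R := k) a)).ker := by
    refine Submodule.map₂_le.mpr fun x hx y hy => ?_
    have hfx : WithConv.toConv (f.ofConv ∘ₗ LinearMap.mulRight k x) ∈ convAnn X :=
      mem_convAnn.mpr fun z hz => mem_convAnn.mp hf _ (Submodule.mul_mem_mul hz hx)
    have hgy : WithConv.toConv (g.ofConv ∘ₗ LinearMap.mulRight k y) ∈ convAnn Y :=
      mem_convAnn.mpr fun z hz => mem_convAnn.mp hg _ (Submodule.mul_mem_mul hz hy)
    have htranslate : map f.ofConv g.ofConv ∘ₗ LinearMap.mulRight k (x ⊗ₜ[k] y) =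
        map (f.ofConv ∘ₗ LinearMap.mulRight k x) (g.ofConv ∘ₗ LinearMap.mulRight k y) :=
      TensorProduct.ext' fun _ _ => by simp
    have hzero := mem_wedge.mp ha _ hfx _ hgy
    rw [LinearMap.convMul_apply, ← htranslate] at hzero
    exact hzero
  rw [LinearMap.convMul_apply, Bialgebra.comul_mul]
  exact hle (hB.comul_mem hb)

theorem IsSubcoalgebra.sup_le_wedge (hX : IsSubcoalgebra k H X) (hY : IsSubcoalgebra k H Y) :
    X ⊔ Y ≤ wedge X Y :=
  sup_le (le_wedge_iff.mpr (hX.convAnn_mul_le _)) (le_wedge_iff.mpr (hY.mul_convAnn_le _))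

end Subcoalgebra

section SimpleSubcoalgebra

variable {k H : Type} [Field k] [Ring H] [HopfAlgebra k H] {A B C D X Y : Submodule k H}

theorem isSimpleSubcoalgebra_one : IsSimpleSubcoalgebra k H (1 : Submodule k H) := by
  have : Nontrivial H := (Bialgebra.counitAlgHom k H).toRingHom.domain_nontrivial
  refine ⟨isSubcoalgebra_one, one_ne_zero, fun D hD _ hD0 => le_antisymm hD ?_⟩
  obtain ⟨x, hx, hx0⟩ := Submodule.exists_mem_ne_zero_of_ne_bot hD0
  obtain ⟨r, rfl⟩ := Submodule.mem_one.mp (hD hx)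
  have hr : r ≠ 0 := ne_zero_of_map hx0
  rw [Algebra.algebraMap_eq_smul_one, Submodule.smul_mem_iff _ hr] at hx
  exact Submodule.one_le.mpr hx

theorem IsSimpleSubcoalgebra.convAnn_sup_convAnn_eq_top (hD : IsSimpleSubcoalgebra k H D)
    (hX : IsSubcoalgebra k H X) (hDX : ¬ D ≤ X) : convAnn X ⊔ convAnn D = ⊤ := by
  rw [← convAnn_inf, ← convAnn_bot]
  by_contra hne
  exact hDX (inf_eq_right.mp
    (hD.2.2 _ inf_le_right (hX.inf hD.1) fun hbot => hne (congrArg convAnn hbot)))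

theorem IsSimpleSubcoalgebra.le_or_le_of_le_wedge (hD : IsSimpleSubcoalgebra k H D)
    (hX : IsSubcoalgebra k H X) (hY : IsSubcoalgebra k H Y) (h : D ≤ wedge X Y) :
    D ≤ X ∨ D ≤ Y := by
  by_contra! hcon
  refine hD.2.1 (le_bot_iff.mp (convAnn_le_convAnn_iff.mp ?_))
  calc convAnn ⊥ = ⊤ := convAnn_bot
    _ ≤ ⊤ * ⊤ := fun f _ =>
      one_mul f ▸ Submodule.mul_mem_mul Submodule.mem_top Submodule.mem_top
    _ = (convAnn X ⊔ convAnn D) * (convAnn Y ⊔ convAnn D) := by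
      rw [hD.convAnn_sup_convAnn_eq_top hX hcon.1, hD.convAnn_sup_convAnn_eq_top hY hcon.2]
    _ ≤ convAnn D := by
      rw [Submodule.sup_mul, Submodule.mul_sup]
      exact sup_le (sup_le (le_wedge_iff.mp h) (hD.1.mul_convAnn_le _)) (hD.1.convAnn_mul_le _)

theorem IsSimpleSubcoalgebra.exists_le_of_le_finset_sup (hD : IsSimpleSubcoalgebra k H D)
    {ι : Type*} {A : ι → Submodule k H} (hA : ∀ i, IsSubcoalgebra k H (A i)) (s : Finset ι)
    (h : D ≤ s.sup A) : ∃ i ∈ s, D ≤ A i := by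
  classical
  induction s using Finset.induction_on with
  | empty => exact absurd (le_bot_iff.mp h) hD.2.1
  | insert i s _ ih =>
    rw [Finset.sup_insert] at h
    have hs : IsSubcoalgebra k H (s.sup A) :=
      Finset.sup_induction isSubcoalgebra_bot (fun _ h₁ _ h₂ => h₁.sup h₂) fun i _ => hA i
    rcases hD.le_or_le_of_le_wedge (hA i) hs (h.trans ((hA i).sup_le_wedge hs)) with hi | hDs
    · exact ⟨i, Finset.mem_insert_self i s, hi⟩
    · obtain ⟨j, hj, hDj⟩ := ih hDs
      exact ⟨j, Finset.mem_insert_of_mem hj, hDj⟩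

variable [FiniteDimensional k H]

theorem IsSimpleSubcoalgebra.exists_le_of_le_iSup (hD : IsSimpleSubcoalgebra k H D) {ι : Type*}
    {A : ι → Submodule k H} (hA : ∀ i, IsSubcoalgebra k H (A i)) (h : D ≤ ⨆ i, A i) :
    ∃ i, D ≤ A i := by
  have hcompact : IsCompactElement D :=
    (Submodule.fg_iff_compact D).mp (IsNoetherian.noetherian D)
  obtain ⟨s, hs⟩ := CompleteLattice.IsCompactElement.exists_finset_of_le_iSup _ hcompact A h
  obtain ⟨i, -, hi⟩ := hD.exists_le_of_le_finset_sup hA s (s.sup_eq_iSup A ▸ hs)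
  exact ⟨i, hi⟩

theorem IsSubcoalgebra.exists_isSimpleSubcoalgebra_le (hA : IsSubcoalgebra k H A) (hA0 : A ≠ ⊥) :
    ∃ D ≤ A, IsSimpleSubcoalgebra k H D := by
  obtain ⟨D, ⟨hDA, hD, hD0⟩, hmin⟩ := wellFounded_lt.has_min
    {D : Submodule k H | D ≤ A ∧ IsSubcoalgebra k H D ∧ D ≠ ⊥} ⟨A, le_rfl, hA, hA0⟩
  refine ⟨D, hDA, hD, hD0, fun E hED hE hE0 => ?_⟩
  by_contra hne
  exact hmin E ⟨hED.trans hDA, hE, hE0⟩ (lt_of_le_of_ne hED hne)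

theorem exists_isSubcoalgebra_convAnn_eq (I : Ideal (WithConv (H →ₗ[k] k))) [I.IsTwoSided] :
    ∃ X : Submodule k H, IsSubcoalgebra k H X ∧ convAnn X = I.restrictScalars k :=
  ⟨convCoann (I.restrictScalars k),
    isSubcoalgebra_iff_exists_ideal.mpr ⟨I, inferInstance, convAnn_convCoann _⟩,
    convAnn_convCoann _⟩

theorem IsSubcoalgebra.exists_le_wedge (hA : IsSubcoalgebra k H A) (hA0 : A ≠ ⊥)
    (hAs : ¬ IsSimpleSubcoalgebra k H A) : ∃ X Y : Submodule k H, IsSubcoalgebra k H X ∧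
      IsSubcoalgebra k H Y ∧ X < A ∧ Y < A ∧ A ≤ wedge X Y := by
  obtain ⟨E, hEA, hE, hE0⟩ : ∃ E < A, IsSubcoalgebra k H E ∧ E ≠ ⊥ := by
    by_contra! hcon
    refine hAs ⟨hA, hA0, fun E hEA hE hE0 => ?_⟩
    by_contra hne
    exact hE0 (hcon E (lt_of_le_of_ne hEA hne) hE)
  obtain ⟨I, _, hI⟩ := isSubcoalgebra_iff_exists_ideal.mp hA
  obtain ⟨J, _, hJ⟩ := isSubcoalgebra_iff_exists_ideal.mp hE
  have : Module.Finite k (WithConv (H →ₗ[k] k)) :=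
    Module.Finite.equiv (WithConv.linearEquiv k (H →ₗ[k] k)).symm
  have : IsArtinianRing (WithConv (H →ₗ[k] k)) := IsArtinianRing.of_finite k _
  have hIJ : I < J := by
    rw [← convAnn_lt_convAnn_iff, hI, hJ] at hEA
    exact hEA
  have hJtop : J ≠ ⊤ := by
    rintro rfl
    rw [Submodule.restrictScalars_top, ← convAnn_bot] at hJ
    exact hE0 (le_bot_iff.mp (convAnn_le_convAnn_iff.mp hJ.ge))
  obtain ⟨K, L, _, _, hIK, hIL, hKL⟩ := exists_mul_le_of_lt_of_ne_top hIJ hJtop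
  obtain ⟨X, hX, hXK⟩ := exists_isSubcoalgebra_convAnn_eq K
  obtain ⟨Y, hY, hYL⟩ := exists_isSubcoalgebra_convAnn_eq L
  refine ⟨X, Y, hX, hY, ?_, ?_, ?_⟩
  · rw [← convAnn_lt_convAnn_iff, hI, hXK]
    exact hIK
  · rw [← convAnn_lt_convAnn_iff, hI, hYL]
    exact hIL
  · rw [le_wedge_iff, hI, hXK, hYL]
    exact Submodule.mul_le.mpr fun f hf g hg => hKL (Ideal.mul_mem_mul hf hg)

theorem IsSimpleSubcoalgebra.exists_le_mul (hD : IsSimpleSubcoalgebra k H D)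
    (hA : IsSubcoalgebra k H A) (hB : IsSubcoalgebra k H B) (h : D ≤ A * B) :
    ∃ A' ≤ A, IsSimpleSubcoalgebra k H A' ∧ D ≤ A' * B := by
  induction A using WellFoundedLT.induction with
  | ind A ih =>
    by_cases hAs : IsSimpleSubcoalgebra k H A
    · exact ⟨A, le_rfl, hAs, h⟩
    have hA0 : A ≠ ⊥ := by
      rintro rfl
      exact hD.2.1 (le_bot_iff.mp (Submodule.bot_mul B ▸ h))
    obtain ⟨X, Y, hX, hY, hXA, hYA, hXY⟩ := hA.exists_le_wedge hA0 hAs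
    have hwedge : D ≤ wedge (X * B) (Y * B) :=
      calc D ≤ A * B := h
        _ ≤ wedge X Y * B := by gcongr
        _ ≤ wedge (X * B) (Y * B) := hB.wedge_mul_le
    rcases hD.le_or_le_of_le_wedge (hX.mul hB) (hY.mul hB) hwedge with hDX | hDY
    · obtain ⟨A', hA', hs, hle⟩ := ih X hXA hX hDX
      exact ⟨A', hA'.trans hXA.le, hs, hle⟩
    · obtain ⟨A', hA', hs, hle⟩ := ih Y hYA hY hDY
      exact ⟨A', hA'.trans hYA.le, hs, hle⟩

theorem IsSimpleSubcoalgebra.exists_one_le_mul (hC : IsSimpleSubcoalgebra k H C) :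
    ∃ E : Submodule k H, IsSimpleSubcoalgebra k H E ∧ 1 ≤ E * C := by
  obtain ⟨E, -, hE, h⟩ := isSimpleSubcoalgebra_one.exists_le_mul isSubcoalgebra_top hC.1
    (hC.1.one_le_top_mul hC.2.1)
  exact ⟨E, hE, h⟩

end SimpleSubcoalgebra

section Grading

variable {k H : Type} [Field k] [Ring H] [HopfAlgebra k H] {G : Type} [Group G]
  {deg : Submodule k H → G} {A B C D E : Submodule k H}

theorem IsGrading.deg_one (hdeg : IsGrading k H G deg) : deg 1 = 1 :=
  left_eq_mul.mp (hdeg 1 1 1 isSimpleSubcoalgebra_one isSimpleSubcoalgebra_one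
    isSimpleSubcoalgebra_one (one_mul 1).ge)

theorem IsGrading.deg_eq_inv (hdeg : IsGrading k H G deg) (hC : IsSimpleSubcoalgebra k H C)
    (hE : IsSimpleSubcoalgebra k H E) (h : 1 ≤ E * C) : deg E = (deg C)⁻¹ := by
  rw [eq_inv_iff_mul_eq_one, ← hdeg E C 1 hE hC isSimpleSubcoalgebra_one h, hdeg.deg_one]

theorem le_Hgr {S : Set G} (hC : IsSimpleSubcoalgebra k H C) (hS : deg C ∈ S) :
    C ≤ Hgr k H G deg S :=
  le_sSup ⟨hC, hS⟩

variable [FiniteDimensional k H]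

theorem IsGrading.deg_eq_mul_mul (hdeg : IsGrading k H G deg) (hA : IsSimpleSubcoalgebra k H A)
    (hB : IsSimpleSubcoalgebra k H B) (hC : IsSimpleSubcoalgebra k H C)
    (hD : IsSimpleSubcoalgebra k H D) (h : D ≤ A * B * C) :
    deg D = deg A * deg B * deg C := by
  obtain ⟨F, hFle, hF, hDF⟩ := hD.exists_le_mul (hA.1.mul hB.1) hC.1 h
  rw [hdeg F C D hF hC hD hDF, hdeg A B F hA hB hF hFle]

theorem IsGrading.deg_mem_doubleCoset (hdeg : IsGrading k H G deg)
    (hC : IsSimpleSubcoalgebra k H C) (hD : IsSimpleSubcoalgebra k H D) {S T : Set G}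
    (h : D ≤ Hgr k H G deg S * C * Hgr k H G deg T) :
    deg D ∈ DoubleCoset.doubleCoset (deg C) S T := by
  simp only [Hgr, sSup_eq_iSup', Submodule.iSup_mul, Submodule.mul_iSup, iSup_prod'] at h
  obtain ⟨⟨⟨B, hB, hBT⟩, ⟨A, hA, hAS⟩⟩, hle⟩ := hD.exists_le_of_le_iSup
    (fun x => (x.2.2.1.1.mul hC.1).mul x.1.2.1.1) h
  exact DoubleCoset.mem_doubleCoset.mpr
    ⟨deg A, hAS, deg B, hBT, hdeg.deg_eq_mul_mul hA hC hB hD hle⟩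

/-- The subgroup of degrees attained by simple subcoalgebras, i.e. the support of the grading. -/
def IsGrading.support (hdeg : IsGrading k H G deg) : Subgroup G where
  carrier := {g | ∃ C, IsSimpleSubcoalgebra k H C ∧ deg C = g}
  one_mem' := ⟨1, isSimpleSubcoalgebra_one, hdeg.deg_one⟩
  mul_mem' := by
    rintro _ _ ⟨C, hC, rfl⟩ ⟨D, hD, rfl⟩
    obtain ⟨E, hle, hE⟩ := (hC.1.mul hD.1).exists_isSimpleSubcoalgebra_le
      (hC.1.mul_ne_bot hD.1 hC.2.1 hD.2.1)
    exact ⟨E, hE, hdeg C D E hC hD hE hle⟩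
  inv_mem' := by
    rintro _ ⟨C, hC, rfl⟩
    obtain ⟨E, hE, hle⟩ := hC.exists_one_le_mul
    exact ⟨E, hE, hdeg.deg_eq_inv hC hE hle⟩

-- The grading by its support must factor through `G`, and the composite `G → support → G` is the
-- identity by uniqueness of the factorization.
theorem IsUniversalGrading.support_eq_top (hdeg : IsUniversalGrading k H G deg) :
    hdeg.1.support = ⊤ := by
  classical
  let deg' : Submodule k H → hdeg.1.support := fun C =>
    if h : IsSimpleSubcoalgebra k H C then ⟨deg C, C, h, rfl⟩ else 1
  have hdeg'_coe : ∀ C, IsSimpleSubcoalgebra k H C → (deg' C : G) = deg C := fun C hC => by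
    simp [deg', hC]
  have hdeg' : IsGrading k H hdeg.1.support deg' := fun C D E hC hD hE hle => by
    apply Subtype.ext
    rw [Subgroup.coe_mul, hdeg'_coe C hC, hdeg'_coe D hD, hdeg'_coe E hE,
      hdeg.1 C D E hC hD hE hle]
  obtain ⟨f, hf, -⟩ := hdeg.2 _ deg' hdeg'
  have hid : hdeg.1.support.subtype.comp f = MonoidHom.id G :=
    (hdeg.2 G deg hdeg.1).unique (fun C hC => by simp [← hf C hC, hdeg'_coe C hC])
      fun C _ => rfl
  refine (Subgroup.eq_top_iff' _).mpr fun g => ?_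
  have hg : (f g : G) = g := DFunLike.congr_fun hid g
  exact hg ▸ (f g).2

-- If `deg D = m * deg C * deg B` and `B'`, `E` are duals of `B`, `C`, then `D ⊆ (D B' E) C B`, and
-- every simple subcoalgebra of `D B' E` has degree `m`.
theorem IsGrading.le_Hgr_mul_mul_Hgr (hdeg : IsGrading k H G deg) (hsupp : hdeg.support = ⊤)
    (hC : IsSimpleSubcoalgebra k H C) (hD : IsSimpleSubcoalgebra k H D) {S T : Set G}
    (h : deg D ∈ DoubleCoset.doubleCoset (deg C) S T) :
    D ≤ Hgr k H G deg S * C * Hgr k H G deg T := by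
  obtain ⟨m, hm, n, hn, hmn⟩ := DoubleCoset.mem_doubleCoset.mp h
  obtain ⟨B, hB, rfl⟩ : n ∈ hdeg.support := hsupp ▸ Subgroup.mem_top n
  obtain ⟨B', hB', hBB⟩ := hB.exists_one_le_mul
  obtain ⟨E, hE, hEC⟩ := hC.exists_one_le_mul
  have hle : D ≤ D * B' * E * (C * B) :=
    calc D = D * 1 := (mul_one D).symm
      _ ≤ D * (B' * B) := by gcongr
      _ = D * (B' * 1 * B) := by rw [mul_one]
      _ ≤ D * (B' * (E * C) * B) := by gcongr
      _ = D * B' * E * (C * B) := by simp only [mul_assoc]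
  obtain ⟨F, hFle, hF, hDF⟩ :=
    hD.exists_le_mul ((hD.1.mul hB'.1).mul hE.1) (hC.1.mul hB.1) hle
  have hdegF : deg F = m := by
    rw [hdeg.deg_eq_mul_mul hD hB' hE hF hFle, hdeg.deg_eq_inv hB hB' hBB,
      hdeg.deg_eq_inv hC hE hEC, hmn, mul_inv_cancel_right, mul_inv_cancel_right]
  calc D ≤ F * C * B := mul_assoc F C B ▸ hDF
    _ ≤ Hgr k H G deg S * C * Hgr k H G deg T := by
      gcongr
      exacts [le_Hgr hF (hdegF ▸ hm), le_Hgr hB hn]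

end Grading

section DoubleCoset

variable {R A : Type*} [CommSemiring R] [Semiring A] [Algebra R A] (L K : Subalgebra R A)

theorem toSubmodule_mul_mul_toSubmodule_le_iff {C D : Submodule R A} :
    L.toSubmodule * D * K.toSubmodule ≤ L.toSubmodule * C * K.toSubmodule ↔
      D ≤ L.toSubmodule * C * K.toSubmodule := by
  refine ⟨fun h => le_trans ?_ h, fun h => ?_⟩
  · calc D = 1 * D * 1 := by rw [one_mul, mul_one]
      _ ≤ L.toSubmodule * D * K.toSubmodule := by
        gcongr
        exacts [Submodule.one_le.mpr L.one_mem, Submodule.one_le.mpr K.one_mem]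
  · calc L.toSubmodule * D * K.toSubmodule
        ≤ L.toSubmodule * (L.toSubmodule * C * K.toSubmodule) * K.toSubmodule := by gcongr
      _ = L.toSubmodule * L.toSubmodule * C * (K.toSubmodule * K.toSubmodule) := by
        simp only [mul_assoc]
      _ = L.toSubmodule * C * K.toSubmodule := by
        rw [L.isIdempotentElem_toSubmodule.eq, K.isIdempotentElem_toSubmodule.eq]

end DoubleCoset

theorem statement_15_general {k H : Type} [Field k] [Ring H] [HopfAlgebra k H]
    [FiniteDimensional k H] {G : Type} [Group G] {deg : Submodule k H → G}
    (hdeg : IsGrading k H G deg) (hsupp : hdeg.support = ⊤) (Mg Ng : Subgroup G)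
    (LM LN : Subalgebra k H) (hLM : LM.toSubmodule = Hgr k H G deg ↑Mg)
    (hLN : LN.toSubmodule = Hgr k H G deg ↑Ng) :
    (∀ C D : Submodule k H, IsSimpleSubcoalgebra k H C →
      IsSimpleSubcoalgebra k H D →
      (LM.toSubmodule * C * LN.toSubmodule = LM.toSubmodule * D * LN.toSubmodule ↔
        ∃ m ∈ Mg, ∃ n ∈ Ng, deg D = m * deg C * n)) ∧
    (∀ g : G, ∃ C : Submodule k H, IsSimpleSubcoalgebra k H C ∧
      ∃ m ∈ Mg, ∃ n ∈ Ng, deg C = m * g * n) := by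
  have hle_iff : ∀ C D, IsSimpleSubcoalgebra k H C → IsSimpleSubcoalgebra k H D →
      (LM.toSubmodule * D * LN.toSubmodule ≤ LM.toSubmodule * C * LN.toSubmodule ↔
        deg D ∈ DoubleCoset.doubleCoset (deg C) Mg Ng) := fun C D hC hD => by
    rw [toSubmodule_mul_mul_toSubmodule_le_iff, hLM, hLN]
    exact ⟨hdeg.deg_mem_doubleCoset hC hD, hdeg.le_Hgr_mul_mul_Hgr hsupp hC hD⟩
  refine ⟨fun C D hC hD => Iff.trans ?_ DoubleCoset.mem_doubleCoset, fun g => ?_⟩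
  · refine ⟨fun h => (hle_iff C D hC hD).mp h.ge, fun h => le_antisymm ?_ ?_⟩
    · rw [hle_iff D C hD hC, DoubleCoset.doubleCoset_eq_of_mem h]
      exact DoubleCoset.mem_doubleCoset_self Mg Ng (deg C)
    · exact (hle_iff C D hC hD).mpr h
  · obtain ⟨C, hC, rfl⟩ : g ∈ hdeg.support := hsupp ▸ Subgroup.mem_top g
    exact ⟨C, hC, DoubleCoset.mem_doubleCoset.mp (DoubleCoset.mem_doubleCoset_self Mg Ng (deg C))⟩

noncomputable section

variable (k : Type) [Field k] [CharZero k] [IsAlgClosed k]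
variable (H : Type) [Ring H] [HopfAlgebra k H]

section Statements

variable [FiniteDimensional k H] [IsSemisimpleRing H]

/-- Proposition 56: let `G` be the universal grading group of
`Rep(H^*)`.  For subgroups `M, N ≤ G`, the assignment
`H(M)·C·H(N) ↦ M·deg(C)·N` is a well-defined bijection from the set of double
cosets `H(M)\H/H(N)` onto the set of group double cosets `M\G/N`.
(Well-definedness and injectivity are the displayed equivalence; the last
clause is surjectivity.) -/
theorem statement_15 (G : Type) [Group G] [Finite G]
    (deg : Submodule k H → G) (hdeg : IsUniversalGrading k H G deg)
    (Mg Ng : Subgroup G) (LM LN : Subalgebra k H)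
    (hLM : LM.toSubmodule = Hgr k H G deg ↑Mg)
    (hLN : LN.toSubmodule = Hgr k H G deg ↑Ng) :
    (∀ C D : Submodule k H, IsSimpleSubcoalgebra k H C →
      IsSimpleSubcoalgebra k H D →
      (LM.toSubmodule * C * LN.toSubmodule = LM.toSubmodule * D * LN.toSubmodule ↔
        ∃ m ∈ Mg, ∃ n ∈ Ng, deg D = m * deg C * n)) ∧
    (∀ g : G, ∃ C : Submodule k H, IsSimpleSubcoalgebra k H C ∧
      ∃ m ∈ Mg, ∃ n ∈ Ng, deg C = m * g * n) :=
  statement_15_general hdeg.1 hdeg.support_eq_top Mg Ng LM LN hLM hLN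

end Statements

end

end MackeyPaper
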